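/- arXiv:2505.12270 — 2 statements merged into one kernel-verified Lean document; each statement's English description precedes it below -/
import Mathlib

section
/- Let t be a positive integer with 3 ∤ t. Then for every nonnegative integer n, b^2_{3,2t}(4n+3) ≡ 0 (mod 4). -/
/-- `coloredRegular k l m n` is the number of `k`-colored partitions of `n` into parts
divisible by neither `l` nor `m`, i.e. the coefficient of `q^n` in
`∏_{j ≥ 1, l ∤ j, m ∤ j} (1 - q^j)^{-k}`.  A `k`-colored partition is a multiset of
(part, color) pairs, where parts are positive integers not divisible by `l` or `m`
and colors range over `{0, …, k-1}`. -/
noncomputable def coloredRegular (k l m n : ℕ) : ℕ :=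
  Nat.card {M : Multiset (ℕ × ℕ) //
    (∀ x ∈ M, ¬ l ∣ x.1 ∧ ¬ m ∣ x.1 ∧ x.2 < k) ∧ (M.map Prod.fst).sum = n}

/-!
Let `e` be the Euler product `∏ (1 - X ^ j)` and `ψ = ∑ X ^ (k * (2 * k - 1))` over all integers
`k`, both modulo 2, and put `φ = ψ(X ^ 3)`. Pairing off the terms of `ψ * φ` by a reflection of the
quadratic form `x ^ 2 + 3 * y ^ 2` leaves `ψ * φ = ψ ^ 4 + X * φ ^ 4`, and the terms of exponent
divisible by 3 in this identity read `e * ψ = e ^ 4`, so that `ψ = e ^ 3`.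

The partitions into multiples of `2 * t` not divisible by 3 have generating function
`u(X ^ 2) = u ^ 2` for some `u`. Hence with a single color the generating function is
`H = e(X ^ 3) / (e * u ^ 2)`, that is, `(ψ ^ 4 + X * φ ^ 4) * w ^ 2` for some `w`. Therefore
`H * H' = (ψ * φ * w) ^ 4 + X * (φ ^ 2 * w) ^ 4`, in which every exponent is `0` or `1` modulo 4.
Two colors give `H ^ 2`, with derivative `2 * H * H'`, so `4 * n + 3` times the coefficient of
`X ^ (4 * n + 3)` in `H ^ 2` is divisible by 4.
-/

open PowerSeries Finset

section EnumSeries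

variable (R : Type*) [CommSemiring R] {ι κ : Type*}

/-- The generating function `∑ X ^ w i` over `i ∈ s`, with coefficients in `R`, of a set `s`
weighted by `w`. A weight attained infinitely often gets the junk coefficient `0`. -/
noncomputable def enumSeries (s : Set ι) (w : ι → ℕ) : R⟦X⟧ :=
  .mk fun n ↦ ({i ∈ s | w i = n}.ncard : R)

theorem coeff_enumSeries (s : Set ι) (w : ι → ℕ) (n : ℕ) :
    (enumSeries R s w).coeff n = ({i ∈ s | w i = n}.ncard : R) :=
  coeff_mk _ _

theorem map_natCast_enumSeries (s : Set ι) (w : ι → ℕ) :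
    map (Nat.castRingHom R) (enumSeries ℕ s w) = enumSeries R s w := by
  ext n
  simp [coeff_enumSeries]

theorem coeff_enumSeries_univ_of_injective {w : ι → ℕ} (hw : w.Injective) (n : ℕ)
    [Decidable (∃ i, w i = n)] :
    (enumSeries R Set.univ w).coeff n = if ∃ i, w i = n then 1 else 0 := by
  rw [coeff_enumSeries]
  split_ifs with h
  · obtain ⟨i, rfl⟩ := h
    have hfiber : {j ∈ Set.univ | w j = w i} = {i} := by
      ext j
      simp [hw.eq_iff]
    rw [hfiber, Set.ncard_singleton, Nat.cast_one]
  · have hfiber : {j ∈ Set.univ | w j = n} = ∅ := by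
      ext j
      simpa using fun hj ↦ h ⟨j, hj⟩
    rw [hfiber, Set.ncard_empty, Nat.cast_zero]

theorem enumSeries_singleton (i : ι) (w : ι → ℕ) : enumSeries R {i} w = X ^ w i := by
  ext n
  rw [coeff_enumSeries, coeff_X_pow]
  split_ifs with h
  · have hfiber : {j ∈ ({i} : Set ι) | w j = n} = {i} := by
      ext j
      simpa using fun hj : j = i ↦ hj ▸ h.symm
    rw [hfiber, Set.ncard_singleton, Nat.cast_one]
  · have hfiber : {j ∈ ({i} : Set ι) | w j = n} = ∅ := by
      ext j
      simpa using fun (hj : j = i) hn ↦ h (hj ▸ hn.symm)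
    rw [hfiber, Set.ncard_empty, Nat.cast_zero]

theorem enumSeries_image {f : ι → κ} {s : Set ι} (hf : s.InjOn f) (w : κ → ℕ) :
    enumSeries R (f '' s) w = enumSeries R s (w ∘ f) := by
  ext n
  have hfiber : {k ∈ f '' s | w k = n} = f '' {i ∈ s | (w ∘ f) i = n} := by
    ext k
    constructor
    · rintro ⟨⟨i, hi, rfl⟩, hk⟩
      exact ⟨i, ⟨hi, hk⟩, rfl⟩
    · rintro ⟨i, ⟨hi, hk⟩, rfl⟩
      exact ⟨⟨i, hi, rfl⟩, hk⟩
  rw [coeff_enumSeries, coeff_enumSeries, hfiber, (hf.mono fun i hi ↦ hi.1).ncard_image]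

theorem enumSeries_union {s t : Set ι} {w : ι → ℕ} (hst : Disjoint s t)
    (hs : ∀ n, {i ∈ s | w i = n}.Finite) (ht : ∀ n, {i ∈ t | w i = n}.Finite) :
    enumSeries R (s ∪ t) w = enumSeries R s w + enumSeries R t w := by
  ext n
  have hfiber : {i ∈ s ∪ t | w i = n} = {i ∈ s | w i = n} ∪ {i ∈ t | w i = n} := by
    ext i
    simp [or_and_right]
  have hdisj : Disjoint {i ∈ s | w i = n} {i ∈ t | w i = n} :=
    hst.mono (fun i hi ↦ hi.1) fun i hi ↦ hi.1
  simp only [map_add, coeff_enumSeries, hfiber, Set.ncard_union_eq hdisj (hs n) (ht n),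
    Nat.cast_add]

theorem enumSeries_prod {s : Set ι} {t : Set κ} {v : ι → ℕ} {w : κ → ℕ}
    (hs : ∀ n, {i ∈ s | v i = n}.Finite) (ht : ∀ n, {j ∈ t | w j = n}.Finite) :
    enumSeries R (s ×ˢ t) (fun p ↦ v p.1 + w p.2) = enumSeries R s v * enumSeries R t w := by
  classical
  ext n
  have hfiber : {p ∈ s ×ˢ t | v p.1 + w p.2 = n} = ↑((antidiagonal n).biUnion fun x ↦
      (hs x.1).toFinset ×ˢ (ht x.2).toFinset) := by
    ext p
    simp only [Set.mem_ofPred_eq, Set.mem_prod, coe_biUnion, coe_product, Set.Finite.coe_toFinset,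
      mem_coe, HasAntidiagonal.mem_antidiagonal, Set.mem_iUnion, exists_prop, Prod.exists]
    grind
  have hdisj : (antidiagonal n : Set (ℕ × ℕ)).PairwiseDisjoint fun x ↦
      (hs x.1).toFinset ×ˢ (ht x.2).toFinset := by
    intro x _ y _ hxy
    refine disjoint_left.mpr fun p hpx hpy ↦ hxy ?_
    simp only [mem_product, Set.Finite.mem_toFinset, Set.mem_ofPred_eq] at hpx hpy
    exact Prod.ext (hpx.1.2.symm.trans hpy.1.2) (hpx.2.2.symm.trans hpy.2.2)
  rw [coeff_enumSeries, hfiber, Set.ncard_coe_finset, card_biUnion hdisj, coeff_mul, Nat.cast_sum]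
  refine sum_congr rfl fun x _ ↦ ?_
  rw [card_product, Nat.cast_mul, coeff_enumSeries, coeff_enumSeries,
    Set.ncard_eq_toFinset_card _ (hs x.1), Set.ncard_eq_toFinset_card _ (ht x.2)]

theorem enumSeries_add_one (s : Set ι) (w : ι → ℕ) :
    enumSeries R s (fun i ↦ w i + 1) = X * enumSeries R s w := by
  ext n
  cases n with
  | zero => simp [coeff_enumSeries]
  | succ n => simp [coeff_enumSeries, coeff_succ_X_mul]

theorem enumSeries_univ_eq_fixedPoints {w : ι → ℕ} {σ : ι → ι}
    (hfin : ∀ n, {i | w i = n}.Finite) (hσ : σ.Involutive) (hw : ∀ i, w (σ i) = w i) :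
    enumSeries (ZMod 2) Set.univ w = enumSeries (ZMod 2) (Function.fixedPoints σ) w := by
  classical
  ext n
  have hfiber : {i ∈ Set.univ | w i = n} = ↑(hfin n).toFinset := by
    simp
  have hfixed : {i ∈ Function.fixedPoints σ | w i = n} =
      ↑({i ∈ (hfin n).toFinset | σ i = i} : Finset ι) := by
    ext i
    simp [Function.IsFixedPt, and_comm]
  have hmoved : (#{i ∈ (hfin n).toFinset | σ i ≠ i} : ZMod 2) = 0 := by
    rw [card_eq_sum_ones, Nat.cast_sum]
    refine sum_involution (fun i _ ↦ σ i) (fun _ _ ↦ by decide)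
      (fun i hi _ ↦ (mem_filter.mp hi).2) (fun i hi ↦ ?_) fun i _ ↦ hσ i
    simp only [mem_filter, Set.Finite.mem_toFinset, Set.mem_ofPred_eq] at hi ⊢
    exact ⟨(hw i).trans hi.1, fun h ↦ hi.2 (h.symm.trans (hσ i))⟩
  rw [coeff_enumSeries, coeff_enumSeries, hfiber, hfixed, Set.ncard_coe_finset,
    Set.ncard_coe_finset,
    ← card_filter_add_card_filter_not (s := (hfin n).toFinset) (fun i ↦ σ i = i),
    Nat.cast_add, hmoved, add_zero]

end EnumSeries

section EnumSeriesExpand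

variable (R : Type*) [CommRing R] {ι : Type*}

theorem enumSeries_const_mul {d : ℕ} (hd : d ≠ 0) (s : Set ι) (w : ι → ℕ) :
    enumSeries R s (fun i ↦ d * w i) = expand d hd (enumSeries R s w) := by
  ext n
  rw [coeff_expand]
  split_ifs with h
  · obtain ⟨m, rfl⟩ := h
    simp [coeff_enumSeries, hd, Nat.mul_div_cancel_left m (Nat.pos_of_ne_zero hd)]
  · have hfiber : {i ∈ s | d * w i = n} = ∅ := by
      ext i
      simpa using fun _ hi ↦ h ⟨w i, hi.symm⟩
    simp [coeff_enumSeries, hfiber]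

end EnumSeriesExpand

section MultisetSeries

variable {ι κ : Type*}

/-- The multisets all of whose elements lie in `s`, that is, the partitions with parts in `s`. -/
def multisetsOn (s : Set ι) : Set (Multiset ι) := {M | ∀ x ∈ M, x ∈ s}

/-- The elements of `s` can serve as parts of sizes given by `w`: the sizes are positive, and only
finitely many parts have bounded size. This makes the partitions of each `n` a finite set. -/
structure IsPartWeight (s : Set ι) (w : ι → ℕ) : Prop where
  ne_zero : ∀ i ∈ s, w i ≠ 0
  finite_le : ∀ n, {i ∈ s | w i ≤ n}.Finite

theorem IsPartWeight.mono {s t : Set ι} {w : ι → ℕ} (ht : IsPartWeight t w) (hst : s ⊆ t) :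
    IsPartWeight s w where
  ne_zero i hi := ht.ne_zero i (hst hi)
  finite_le n := (ht.finite_le n).subset fun _ hi ↦ ⟨hst hi.1, hi.2⟩

theorem isPartWeight_id {s : Set ℕ} (hs : 0 ∉ s) : IsPartWeight s id where
  ne_zero _ hi h := hs (h ▸ hi)
  finite_le n := (Set.finite_Iic n).subset fun _ hi ↦ hi.2

theorem IsPartWeight.prod_fst {s : Set ι} {w : ι → ℕ} (hs : IsPartWeight s w) {t : Set κ}
    (ht : t.Finite) : IsPartWeight (s ×ˢ t) (w ∘ Prod.fst) where
  ne_zero p hp := hs.ne_zero p.1 hp.1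
  finite_le n := ((hs.finite_le n).prod ht).subset fun _ hp ↦ ⟨⟨hp.1.1, hp.2⟩, hp.1.2⟩

theorem IsPartWeight.finite_multisetsOn {s : Set ι} {w : ι → ℕ} (hs : IsPartWeight s w) (n : ℕ) :
    {M ∈ multisetsOn s | (M.map w).sum = n}.Finite := by
  classical
  refine (Set.finite_Iic (n • (hs.finite_le n).toFinset.val)).subset ?_
  rintro M ⟨hM, rfl⟩
  refine Multiset.le_iff_count.mpr fun i ↦ ?_
  by_cases hi : i ∈ M
  · have hwi : w i ≤ (M.map w).sum := Multiset.le_sum_of_mem (Multiset.mem_map_of_mem w hi)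
    have hmem : i ∈ (hs.finite_le (M.map w).sum).toFinset.val := by
      simpa using ⟨hM i hi, hwi⟩
    have hcard : M.card ≤ (M.map w).sum := by
      have h := Multiset.card_nsmul_le_sum (s := M.map w) (a := 1) (by
        simpa [Nat.one_le_iff_ne_zero] using fun j hj ↦ hs.ne_zero j (hM j hj))
      simpa using h
    rw [Multiset.count_nsmul, Multiset.count_eq_one_of_mem (Finset.nodup _) hmem, mul_one]
    exact (Multiset.count_le_card i M).trans hcard
  · simp [Multiset.count_eq_zero_of_notMem hi]

variable (R : Type*) [CommSemiring R]

/-- The generating function of the partitions with parts in `s`, a part `i` having size `w i`; in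
product form, `∏ (1 - X ^ w i)⁻¹` over `i ∈ s`. Colored parts are pairs of a size and a color. -/
noncomputable def multisetSeries (s : Set ι) (w : ι → ℕ) : R⟦X⟧ :=
  enumSeries R (multisetsOn s) fun M ↦ (M.map w).sum

theorem map_natCast_multisetSeries (s : Set ι) (w : ι → ℕ) :
    map (Nat.castRingHom R) (multisetSeries ℕ s w) = multisetSeries R s w :=
  map_natCast_enumSeries R _ _

theorem multisetSeries_empty (w : ι → ℕ) : multisetSeries R ∅ w = 1 := by
  have hempty : multisetsOn (∅ : Set ι) = {0} := by
    ext M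
    simp [multisetsOn, Multiset.eq_zero_iff_forall_notMem]
  rw [multisetSeries, hempty, enumSeries_singleton, Multiset.map_zero, Multiset.sum_zero, pow_zero]

theorem multisetsOn_image (f : ι → κ) (s : Set ι) :
    multisetsOn (f '' s) = Multiset.map f '' multisetsOn s := by
  ext M
  constructor
  · intro hM
    choose g hgs hfg using hM
    refine ⟨M.pmap g fun _ hx ↦ hx, fun x hx ↦ ?_, ?_⟩
    · obtain ⟨y, hy, rfl⟩ := Multiset.mem_pmap.mp hx
      exact hgs y hy
    · rw [Multiset.map_pmap]
      simp only [hfg, Multiset.pmap_eq_map, Multiset.map_id']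
  · rintro ⟨N, hN, rfl⟩ x hx
    obtain ⟨i, hi, rfl⟩ := Multiset.mem_map.mp hx
    exact ⟨i, hN i hi, rfl⟩

theorem multisetsOn_union (s t : Set ι) :
    multisetsOn (s ∪ t) = (fun p ↦ p.1 + p.2) '' (multisetsOn s ×ˢ multisetsOn t) := by
  classical
  ext M
  constructor
  · intro hM
    refine ⟨(M.filter (· ∈ s), M.filter (· ∉ s)), ⟨fun x hx ↦ ?_, fun x hx ↦ ?_⟩,
      Multiset.filter_add_not _ M⟩
    · exact (Multiset.mem_filter.mp hx).2
    · exact (hM x (Multiset.mem_filter.mp hx).1).resolve_left (Multiset.mem_filter.mp hx).2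
  · rintro ⟨⟨A, B⟩, ⟨hA, hB⟩, rfl⟩ x hx
    exact (Multiset.mem_add.mp hx).imp (hA x) (hB x)

theorem injOn_add_multisetsOn {s t : Set ι} (hst : Disjoint s t) :
    (multisetsOn s ×ˢ multisetsOn t).InjOn fun p ↦ p.1 + p.2 := by
  classical
  have hfst : ∀ p ∈ multisetsOn s ×ˢ multisetsOn t, (p.1 + p.2).filter (· ∈ s) = p.1 := by
    rintro ⟨A, B⟩ ⟨hA, hB⟩
    rw [Multiset.filter_add, Multiset.filter_eq_self.mpr hA, Multiset.filter_eq_nil.mpr fun x hx ↦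
      hst.notMem_of_mem_right (hB x hx), add_zero]
  intro p hp q hq hpq
  have hsum : p.1 + p.2 = q.1 + q.2 := hpq
  have h : p.1 = q.1 := by rw [← hfst p hp, ← hfst q hq, hsum]
  rw [h] at hsum
  exact Prod.ext h (add_left_cancel hsum)

theorem multisetSeries_union {s t : Set ι} {w : ι → ℕ} (hst : Disjoint s t)
    (hs : IsPartWeight s w) (ht : IsPartWeight t w) :
    multisetSeries R (s ∪ t) w = multisetSeries R s w * multisetSeries R t w := by
  rw [multisetSeries, multisetsOn_union, enumSeries_image R (injOn_add_multisetsOn hst)]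
  simp only [Function.comp_def, Multiset.map_add, Multiset.sum_add]
  exact enumSeries_prod R hs.finite_multisetsOn ht.finite_multisetsOn

theorem multisetSeries_image {f : ι → κ} (hf : f.Injective) (s : Set ι) (w : κ → ℕ) :
    multisetSeries R (f '' s) w = multisetSeries R s (w ∘ f) := by
  rw [multisetSeries, multisetsOn_image, enumSeries_image R (Multiset.map_injective hf).injOn]
  simp only [Function.comp_def, Multiset.map_map, multisetSeries]

theorem multisetSeries_prod_Iio {s : Set ι} {w : ι → ℕ} (hs : IsPartWeight s w) (k : ℕ) :
    multisetSeries R (s ×ˢ Set.Iio k) (w ∘ Prod.fst) = multisetSeries R s w ^ k := by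
  induction k with
  | zero => simp [multisetSeries_empty]
  | succ k ih =>
    have hsplit : s ×ˢ Set.Iio (k + 1) = s ×ˢ Set.Iio k ∪ (·, k) '' s := by
      ext ⟨i, c⟩
      simp only [Set.mem_prod, Set.mem_Iio, Set.mem_union, Set.mem_image, Prod.mk.injEq]
      grind
    have hpart := hs.prod_fst (Set.finite_Iio (k + 1))
    rw [hsplit] at hpart
    have hdisj : Disjoint (s ×ˢ Set.Iio k) ((·, k) '' s) := by
      rw [Set.disjoint_left]
      rintro _ h ⟨i, _, rfl⟩
      exact lt_irrefl k h.2
    rw [hsplit, multisetSeries_union R hdisj (hpart.mono Set.subset_union_left)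
      (hpart.mono Set.subset_union_right), ih,
      multisetSeries_image R (Prod.mk_left_injective k), pow_succ]
    rfl

theorem multisetSeries_Ioi_eq_mk_card_partition :
    multisetSeries R (Set.Ioi 0) id = .mk fun n ↦ (Fintype.card (Nat.Partition n) : R) := by
  ext n
  have hparts : {M ∈ multisetsOn (Set.Ioi 0) | (M.map id).sum = n} =
      Set.range (Nat.Partition.parts (n := n)) := by
    ext M
    constructor
    · rintro ⟨hM, hsum⟩
      exact ⟨⟨M, fun {i} hi ↦ hM i hi, by simpa using hsum⟩, rfl⟩
    · rintro ⟨p, rfl⟩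
      exact ⟨fun i hi ↦ p.parts_pos hi, by simpa using p.parts_sum⟩
  rw [multisetSeries, coeff_enumSeries, coeff_mk, hparts, ← Set.image_univ,
    Set.ncard_image_of_injective _ fun _ _ ↦ Nat.Partition.ext, Set.ncard_univ,
    Nat.card_eq_fintype_card]

end MultisetSeries

section RestrictedParts

variable (R : Type*) [CommRing R]

theorem multisetSeries_image_mul {d : ℕ} (hd : d ≠ 0) (s : Set ℕ) :
    multisetSeries R ((d * ·) '' s) id = expand d hd (multisetSeries R s id) := by
  rw [multisetSeries_image R (mul_right_injective₀ hd)]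
  simp only [multisetSeries, ← enumSeries_const_mul, ← Multiset.sum_map_mul_left,
    Function.comp_def, id]

theorem multisetSeries_not_dvd_mul_expand {l : ℕ} (hl : l ≠ 0) :
    multisetSeries R {j | ¬ l ∣ j} id * expand l hl (multisetSeries R (Set.Ioi 0) id) =
      multisetSeries R (Set.Ioi 0) id := by
  have hsplit : {j | ¬ l ∣ j} ∪ (l * ·) '' Set.Ioi 0 = Set.Ioi 0 := by
    ext j
    simp only [Set.mem_union, Set.mem_ofPred_eq, Set.mem_image, Set.mem_Ioi, Nat.pos_iff_ne_zero]
    constructor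
    · rintro (hj | ⟨i, hi, rfl⟩)
      · exact fun h ↦ hj (h ▸ dvd_zero l)
      · exact mul_ne_zero hl hi
    · rintro hj
      refine or_iff_not_imp_left.mpr fun h ↦ ?_
      obtain ⟨i, rfl⟩ := not_not.mp h
      exact ⟨i, right_ne_zero_of_mul hj, rfl⟩
  have hdisj : Disjoint {j | ¬ l ∣ j} ((l * ·) '' Set.Ioi 0) := by
    rw [Set.disjoint_left]
    rintro _ hj ⟨i, _, rfl⟩
    exact hj (dvd_mul_right l i)
  have hpart : IsPartWeight (Set.Ioi 0) (id : ℕ → ℕ) := isPartWeight_id (lt_irrefl 0)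
  rw [← hsplit] at hpart
  rw [← multisetSeries_image_mul, ← multisetSeries_union R hdisj
    (hpart.mono Set.subset_union_left) (hpart.mono Set.subset_union_right), hsplit]

theorem multisetSeries_not_dvd_and_not_dvd_mul_expand {l d : ℕ} (hd : d ≠ 0)
    (hld : l.Coprime d) (m : ℕ) :
    multisetSeries R {j | ¬ l ∣ j ∧ ¬ d * m ∣ j} id *
        expand d hd (multisetSeries R {j | ¬ l ∣ j ∧ m ∣ j} id) =
      multisetSeries R {j | ¬ l ∣ j} id := by
  have hsplit : {j | ¬ l ∣ j ∧ ¬ d * m ∣ j} ∪ (d * ·) '' {j | ¬ l ∣ j ∧ m ∣ j} = {j | ¬ l ∣ j} := by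
    ext j
    simp only [Set.mem_union, Set.mem_ofPred_eq, Set.mem_image]
    constructor
    · rintro (hj | ⟨i, hi, rfl⟩)
      · exact hj.1
      · exact fun h ↦ hi.1 (hld.dvd_of_dvd_mul_left h)
    · intro hj
      refine or_iff_not_imp_left.mpr fun h ↦ ?_
      obtain ⟨i, rfl⟩ : d * m ∣ j := not_not.mp fun hdm ↦ h ⟨hj, hdm⟩
      exact ⟨m * i, ⟨fun h ↦ hj (mul_assoc d m i ▸ h.mul_left d), dvd_mul_right m i⟩,
        (mul_assoc d m i).symm⟩
  have hdisj : Disjoint {j | ¬ l ∣ j ∧ ¬ d * m ∣ j} ((d * ·) '' {j | ¬ l ∣ j ∧ m ∣ j}) := by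
    rw [Set.disjoint_left]
    rintro _ hj ⟨i, hi, rfl⟩
    exact hj.2 (mul_dvd_mul_left d hi.2)
  have hpart : IsPartWeight {j | ¬ l ∣ j} (id : ℕ → ℕ) := isPartWeight_id fun h ↦ h (dvd_zero l)
  rw [← hsplit] at hpart
  rw [← multisetSeries_image_mul, ← multisetSeries_union R hdisj
    (hpart.mono Set.subset_union_left) (hpart.mono Set.subset_union_right), hsplit]

open scoped WithPiTopology in
theorem multisetSeries_Ioi_mul_pentagonalSeries :
    multisetSeries R (Set.Ioi 0) id * pentagonalSeries R = 1 := by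
  let : TopologicalSpace R := ⊥
  have : DiscreteTopology R := ⟨rfl⟩
  have hpart := Nat.Partition.hasProd_powerSeriesMk_card_restricted R fun _ ↦ True
  have hprod := hpart.mul (WithPiTopology.hasProd_one_sub_X_pow R)
  have hterm (i : ℕ) : (if True then ∑' j : ℕ, (X : R⟦X⟧) ^ ((i + 1) * j) else 1) *
      (1 - X ^ (i + 1)) = 1 := by
    simp_rw [if_true, pow_mul]
    exact WithPiTopology.tsum_pow_mul_one_sub_of_constantCoeff_eq_zero (by simp)
  simp only [hterm] at hprod
  have h := hprod.unique hasProd_one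
  rw [multisetSeries_Ioi_eq_mk_card_partition, ← h]
  simp [Nat.Partition.restricted]

end RestrictedParts

section Frobenius

theorem pow_prime_eq_expand {p : ℕ} [Fact p.Prime] (f : (ZMod p)⟦X⟧) :
    f ^ p = expand p (Fact.out : p.Prime).ne_zero f := by
  have h := MvPowerSeries.map_frobenius_expand (R := ZMod p) (σ := Unit) p
    (Fact.out : p.Prime).ne_zero (f := f)
  rw [ZMod.frobenius_zmod, MvPowerSeries.map_id] at h
  exact h.symm

theorem pow_four_eq_expand (f : (ZMod 2)⟦X⟧) : f ^ 4 = expand 4 four_ne_zero f := by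
  calc
    f ^ 4 = (f ^ 2) ^ 2 := pow_mul f 2 2
    _ = expand 4 four_ne_zero f := by
      rw [pow_prime_eq_expand, pow_prime_eq_expand, ← expand_mul]

end Frobenius

section Hexagonal

/-- The generalized hexagonal number `k * (2 * k - 1)`; as `k` runs through `ℤ`, these are exactly
the triangular numbers, each of them once. The integer under `toNat` is never negative. -/
def hexagonal (k : ℤ) : ℕ := (k * (2 * k - 1)).toNat

theorem natCast_hexagonal (k : ℤ) : (hexagonal k : ℤ) = k * (2 * k - 1) := by
  refine Int.toNat_of_nonneg ?_
  rcases le_or_gt k 0 with hk | hk <;> nlinarith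

theorem hexagonal_injective : Function.Injective hexagonal := by
  intro a b hab
  have h : (hexagonal a : ℤ) = hexagonal b := by rw [hab]
  rw [natCast_hexagonal, natCast_hexagonal] at h
  have hfactor : (a - b) * (2 * (a + b) - 1) = 0 := by linear_combination h
  rcases mul_eq_zero.mp hfactor with h | h <;> lia

theorem finite_hexagonal_le (n : ℕ) : {k | hexagonal k ≤ n}.Finite :=
  (Set.finite_Iic n).preimage hexagonal_injective.injOn

theorem finite_hexagonal_eq (n : ℕ) : {k ∈ Set.univ | hexagonal k = n}.Finite :=
  (finite_hexagonal_le n).subset fun _ hk ↦ hk.2.le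

theorem finite_hexagonal_add_three_mul_hexagonal_eq (n : ℕ) :
    {p : ℤ × ℤ | hexagonal p.1 + 3 * hexagonal p.2 = n}.Finite :=
  ((finite_hexagonal_le n).prod (finite_hexagonal_le n)).subset fun p hp ↦ by
    simp only [Set.mem_ofPred_eq, Set.mem_prod] at hp ⊢
    lia

/-- The series `∑ X ^ hexagonal k` over `k : ℤ`, usually written `ψ(q)`. -/
noncomputable def hexagonalSeries (R : Type*) [CommSemiring R] : R⟦X⟧ :=
  enumSeries R Set.univ hexagonal

/-- The involution of `ℤ × ℤ` behind the identity `ψ(q) ψ(q³) = ψ(q)⁴ + q ψ(q³)⁴` modulo 2. In the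
coordinates `x = 4 * a - 1`, `y = 4 * b - 1`, for which
`x ^ 2 + 3 * y ^ 2 = 8 * (hexagonal a + 3 * hexagonal b) + 4`, it is the reflection
`(x, y) ↦ ((3 * y - x) / 2, (x + y) / 2)` up to the sign that makes both entries `-1` modulo 4. -/
def hexagonalReflection (p : ℤ × ℤ) : ℤ × ℤ :=
  if Even (p.1 + p.2) then ((3 * p.2 - p.1) / 2, (p.1 + p.2) / 2)
  else ((p.1 - 3 * p.2 + 1) / 2, (1 - p.1 - p.2) / 2)

theorem hexagonalReflection_involutive : hexagonalReflection.Involutive := by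
  rintro ⟨a, b⟩
  grind [hexagonalReflection]

theorem hexagonal_hexagonalReflection (p : ℤ × ℤ) :
    hexagonal (hexagonalReflection p).1 + 3 * hexagonal (hexagonalReflection p).2 =
      hexagonal p.1 + 3 * hexagonal p.2 := by
  obtain ⟨a, b⟩ := p
  zify
  simp only [natCast_hexagonal, hexagonalReflection]
  split_ifs with h
  · obtain ⟨c, hc⟩ := h
    obtain rfl : a = c + c - b := by lia
    have hfst : (3 * b - (c + c - b)) / 2 = 2 * b - c := by lia
    have hsnd : (c + c - b + b) / 2 = c := by lia
    rw [hfst, hsnd]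
    ring
  · obtain ⟨c, hc⟩ := Int.not_even_iff_odd.mp h
    obtain rfl : a = 2 * c + 1 - b := by lia
    have hfst : (2 * c + 1 - b - 3 * b + 1) / 2 = c - 2 * b + 1 := by lia
    have hsnd : (1 - (2 * c + 1 - b) - b) / 2 = -c := by lia
    rw [hfst, hsnd]
    ring

theorem fixedPoints_hexagonalReflection :
    Function.fixedPoints hexagonalReflection =
      (fun a ↦ (a, a)) '' Set.univ ∪ (fun b ↦ (1 - 3 * b, b)) '' Set.univ := by
  ext ⟨a, b⟩
  simp only [Function.mem_fixedPoints, Function.IsFixedPt, hexagonalReflection, Set.image_univ,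
    Set.mem_union, Set.mem_range, Prod.mk.injEq, exists_eq_right]
  grind

theorem hexagonalSeries_mul_expand_three_eq_enumSeries (R : Type*) [CommRing R] :
    hexagonalSeries R * expand 3 three_ne_zero (hexagonalSeries R) =
      enumSeries R Set.univ fun p : ℤ × ℤ ↦ hexagonal p.1 + 3 * hexagonal p.2 := by
  have hfin (n : ℕ) : {k ∈ Set.univ | 3 * hexagonal k = n}.Finite :=
    (finite_hexagonal_le n).subset fun k hk ↦ by
      simp only [Set.mem_ofPred_eq] at hk ⊢
      lia
  rw [hexagonalSeries, ← enumSeries_const_mul, ← enumSeries_prod _ finite_hexagonal_eq hfin,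
    Set.univ_prod_univ]

theorem hexagonal_one_sub_three_mul_add (b : ℤ) :
    hexagonal (1 - 3 * b) + 3 * hexagonal b = 12 * hexagonal b + 1 := by
  zify
  simp only [natCast_hexagonal]
  ring

theorem hexagonalSeries_mul_expand_three :
    hexagonalSeries (ZMod 2) * expand 3 three_ne_zero (hexagonalSeries (ZMod 2)) =
      hexagonalSeries (ZMod 2) ^ 4 +
        X * expand 3 three_ne_zero (hexagonalSeries (ZMod 2)) ^ 4 := by
  have hfin := finite_hexagonal_add_three_mul_hexagonal_eq
  have hdisj : Disjoint ((fun a : ℤ ↦ (a, a)) '' Set.univ)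
      ((fun b : ℤ ↦ (1 - 3 * b, b)) '' Set.univ) := by
    rw [Set.disjoint_left]
    rintro _ ⟨a, _, rfl⟩ ⟨b, _, hb⟩
    simp only [Prod.mk.injEq] at hb
    lia
  have hdiag : Set.InjOn (fun a : ℤ ↦ (a, a)) Set.univ := by
    simp [Set.InjOn]
  have hanti : Set.InjOn (fun b : ℤ ↦ (1 - 3 * b, b)) Set.univ := by
    simp [Set.InjOn]
  rw [hexagonalSeries_mul_expand_three_eq_enumSeries, enumSeries_univ_eq_fixedPoints hfin
    hexagonalReflection_involutive hexagonal_hexagonalReflection, fixedPoints_hexagonalReflection,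
    enumSeries_union _ hdisj (fun n ↦ (hfin n).subset fun _ hp ↦ hp.2)
      (fun n ↦ (hfin n).subset fun _ hp ↦ hp.2),
    enumSeries_image _ hdiag, enumSeries_image _ hanti, pow_four_eq_expand, pow_four_eq_expand,
    ← expand_mul, hexagonalSeries, ← enumSeries_const_mul, ← enumSeries_const_mul,
    ← enumSeries_add_one]
  simp only [Function.comp_def, hexagonal_one_sub_three_mul_add, ← one_add_mul]

end Hexagonal

section Contract

variable {R : Type*} [CommRing R]

/-- The series `∑ a (p * n) X ^ n` extracted from `∑ a n X ^ n`; it undoes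
`PowerSeries.expand p`. -/
noncomputable def contract (p : ℕ) (f : R⟦X⟧) : R⟦X⟧ := .mk fun n ↦ f.coeff (p * n)

theorem coeff_contract (p : ℕ) (f : R⟦X⟧) (n : ℕ) : (contract p f).coeff n = f.coeff (p * n) :=
  coeff_mk _ _

theorem contract_add (p : ℕ) (f g : R⟦X⟧) : contract p (f + g) = contract p f + contract p g := by
  ext n
  simp only [map_add, coeff_contract]

theorem contract_mul_expand {p : ℕ} (hp : p ≠ 0) (f g : R⟦X⟧) :
    contract p (f * expand p hp g) = contract p f * g := by
  ext n
  rw [coeff_contract, coeff_mul, coeff_mul]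
  symm
  refine sum_of_injOn (Prod.map (p * ·) (p * ·))
    ((mul_right_injective₀ hp).prodMap (mul_right_injective₀ hp)).injOn ?_ ?_ ?_
  · rintro ⟨i, j⟩ hij
    simp_all [← mul_add]
  · rintro ⟨i, j⟩ hij hnot
    simp only [HasAntidiagonal.mem_antidiagonal] at hij
    refine mul_eq_zero_of_right _ (coeff_expand_of_not_dvd p hp g fun hj ↦ hnot ?_)
    obtain ⟨i, rfl⟩ : p ∣ i := (Nat.dvd_add_left hj).mp (hij ▸ dvd_mul_right p n)
    obtain ⟨j, rfl⟩ := hj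
    refine ⟨(i, j), ?_, rfl⟩
    simpa [← mul_add, hp] using hij
  · rintro ⟨i, j⟩ -
    simp [coeff_contract]

theorem contract_expand_of_coprime {p q : ℕ} (hq : q ≠ 0) (hpq : q.Coprime p) (f : R⟦X⟧) :
    contract p (expand q hq f) = expand q hq (contract p f) := by
  ext n
  rw [coeff_contract, coeff_expand, coeff_expand]
  split_ifs with h₁ h₂ h₂
  · rw [coeff_contract, Nat.mul_div_assoc p h₂]
  · exact absurd (hpq.dvd_of_dvd_mul_left h₁) h₂
  · exact absurd (h₂.mul_left p) h₁
  · rfl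

theorem contract_X_mul_expand {p : ℕ} (hp : 1 < p) (f : R⟦X⟧) :
    contract p (X * expand p (Nat.ne_zero_of_lt hp) f) = 0 := by
  have hX : contract p (X : R⟦X⟧) = 0 := by
    ext n
    have hn : p * n ≠ 1 := fun h ↦ hp.ne' (Nat.eq_one_of_mul_eq_one_right h)
    simp [coeff_contract, coeff_X, hn]
  rw [contract_mul_expand, hX, zero_mul]

end Contract

section HexagonalModTwo

theorem exists_hexagonal_eq_three_mul_iff (n : ℕ) :
    (∃ k, hexagonal k = 3 * n) ↔ ∃ k, pentagonal k = n := by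
  constructor
  · rintro ⟨a, ha⟩
    zify at ha
    rw [natCast_hexagonal] at ha
    obtain ⟨k, rfl | rfl⟩ : ∃ k, a = 3 * k ∨ a = 3 * k + 2 := by
      have hmod : a % 3 ≠ 1 := by
        intro h
        obtain ⟨c, rfl⟩ : ∃ c, a = 3 * c + 1 := ⟨a / 3, by lia⟩
        have : (3 * c + 1) * (2 * (3 * c + 1) - 1) = 3 * (6 * c ^ 2 + 3 * c) + 1 := by ring
        lia
      exact ⟨a / 3, by lia⟩
    · refine ⟨2 * k, ?_⟩
      zify
      linarith [two_mul_natCast_pentagonal (2 * k)]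
    · refine ⟨-2 * k - 1, ?_⟩
      zify
      linarith [two_mul_natCast_pentagonal (-2 * k - 1)]
  · rintro ⟨k, rfl⟩
    have hk := two_mul_natCast_pentagonal k
    rcases Int.even_or_odd' k with ⟨j, rfl | rfl⟩
    · refine ⟨3 * j, ?_⟩
      zify
      rw [natCast_hexagonal]
      linarith
    · refine ⟨-3 * j - 1, ?_⟩
      zify
      rw [natCast_hexagonal]
      linarith

theorem contract_three_hexagonalSeries :
    contract 3 (hexagonalSeries (ZMod 2)) = pentagonalSeries (ZMod 2) := by
  classical
  ext n
  rw [coeff_contract, hexagonalSeries, coeff_enumSeries_univ_of_injective _ hexagonal_injective,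
    exists_hexagonal_eq_three_mul_iff]
  split_ifs with h
  · obtain ⟨k, rfl⟩ := h
    rw [coeff_pentagonalSeries_pentagonal]
    rcases Int.even_or_odd k with hk | hk
    · simp [Int.negOnePow_even k hk]
    · simp [Int.negOnePow_odd k hk]
  · exact (coeff_pentagonalSeries_eq_zero _ h).symm

theorem hexagonalSeries_eq_pentagonalSeries_pow_three :
    hexagonalSeries (ZMod 2) = pentagonalSeries (ZMod 2) ^ 3 := by
  have hne : pentagonalSeries (ZMod 2) ≠ 0 :=
    right_ne_zero_of_mul_eq_one (multisetSeries_Ioi_mul_pentagonalSeries (ZMod 2))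
  have h := congrArg (contract 3) hexagonalSeries_mul_expand_three
  rw [contract_mul_expand, contract_add, ← map_pow, contract_X_mul_expand (by decide), add_zero,
    pow_four_eq_expand, contract_expand_of_coprime _ (by decide), ← pow_four_eq_expand,
    contract_three_hexagonalSeries, pow_succ'] at h
  exact mul_left_cancel₀ hne h

end HexagonalModTwo

theorem coloredRegular_eq_coeff_pow (k l m n : ℕ) :
    coloredRegular k l m n = (multisetSeries ℕ {j | ¬ l ∣ j ∧ ¬ m ∣ j} id ^ k).coeff n := by
  have hpart : IsPartWeight {j | ¬ l ∣ j ∧ ¬ m ∣ j} (id : ℕ → ℕ) :=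
    isPartWeight_id fun h ↦ h.1 (dvd_zero l)
  rw [← multisetSeries_prod_Iio ℕ hpart, multisetSeries, coeff_enumSeries, Nat.cast_id,
    ← Nat.card_coe_set_eq]
  exact Nat.card_congr (Equiv.subtypeEquivRight fun M ↦ by simp [multisetsOn, and_assoc])

theorem exists_multisetSeries_eq_hexagonalSeries_mul_sq (t : ℕ) :
    ∃ w : (ZMod 2)⟦X⟧, multisetSeries (ZMod 2) {j | ¬ 3 ∣ j ∧ ¬ 2 * t ∣ j} id =
      hexagonalSeries (ZMod 2) * expand 3 three_ne_zero (hexagonalSeries (ZMod 2)) * w ^ 2 := by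
  set h := multisetSeries (ZMod 2) {j | ¬ 3 ∣ j ∧ ¬ 2 * t ∣ j} id
  set u := multisetSeries (ZMod 2) {j | ¬ 3 ∣ j ∧ t ∣ j} id
  set p := multisetSeries (ZMod 2) (Set.Ioi 0) id
  set e := pentagonalSeries (ZMod 2)
  set g := expand 3 three_ne_zero e with hg
  set q := expand 3 three_ne_zero p
  have hpe : p * e = 1 := multisetSeries_Ioi_mul_pentagonalSeries (ZMod 2)
  have hqg : q * g = 1 := by rw [← map_mul, hpe, map_one]
  have hug : h * u ^ 2 * e = g := by
    have hu := multisetSeries_not_dvd_and_not_dvd_mul_expand (ZMod 2) two_ne_zero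
      (show Nat.Coprime 3 2 by decide) t
    have hp := multisetSeries_not_dvd_mul_expand (ZMod 2) three_ne_zero
    rw [← hu, ← pow_prime_eq_expand] at hp
    calc
      h * u ^ 2 * e = h * u ^ 2 * (q * g) * e := by rw [hqg, mul_one]
      _ = (h * u ^ 2 * q) * e * g := by ring
      _ = g := by rw [hp, hpe, one_mul]
  refine ⟨q * p ^ 2 * (u * h * e * q), ?_⟩
  rw [hexagonalSeries_eq_pentagonalSeries_pow_three, map_pow, ← hg]
  symm
  calc
    e ^ 3 * g ^ 3 * (q * p ^ 2 * (u * h * e * q)) ^ 2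
      = (p * e) ^ 4 * (q * g) ^ 3 * (q * (h * u ^ 2 * e)) * h := by ring
    _ = h := by simp only [hpe, hug, hqg, one_pow, one_mul]

section Congruence

theorem map_derivative {R S : Type*} [CommSemiring R] [CommSemiring S] (φ : R →+* S) (f : R⟦X⟧) :
    map φ (d⁄dX R f) = d⁄dX S (map φ f) := by
  ext n
  simp [coeff_derivative]

theorem derivative_pow_char (R : Type*) [CommSemiring R] (p : ℕ) [CharP R p] (f : R⟦X⟧) :
    d⁄dX R (f ^ p) = 0 := by
  rw [derivative_pow, ← map_natCast C, CharP.cast_eq_zero, map_zero, zero_mul, zero_mul]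

theorem sq_dvd_mul_coeff_pow {m n : ℕ} {F : ℕ⟦X⟧} {f : (ZMod m)⟦X⟧}
    (hf : map (Nat.castRingHom (ZMod m)) F = f)
    (hcoeff : (f ^ (m - 1) * d⁄dX (ZMod m) f).coeff n = 0) :
    m ^ 2 ∣ (F ^ m).coeff (n + 1) * (n + 1) := by
  have hdvd : m ∣ (F ^ (m - 1) * d⁄dX ℕ F).coeff n := by
    rw [← ZMod.natCast_eq_zero_iff, ← hcoeff, ← hf, ← map_derivative, ← map_pow, ← map_mul,
      coeff_map, Nat.coe_castRingHom]
  have hderiv : (F ^ m).coeff (n + 1) * (n + 1) = m * (F ^ (m - 1) * d⁄dX ℕ F).coeff n := by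
    have h := coeff_derivative (F ^ m) n
    rw [derivative_pow, mul_assoc, ← nsmul_eq_mul, map_nsmul, nsmul_eq_mul] at h
    exact_mod_cast h.symm
  rw [hderiv, sq]
  exact mul_dvd_mul_left m hdvd

theorem coeff_pow_four_add_X_mul_pow_four (f g : (ZMod 2)⟦X⟧) (n : ℕ) :
    (f ^ 4 + X * g ^ 4).coeff (4 * n + 2) = 0 := by
  rw [map_add, coeff_succ_X_mul, pow_four_eq_expand, pow_four_eq_expand,
    coeff_expand_of_not_dvd 4 _ _ (by lia), coeff_expand_of_not_dvd 4 _ _ (by lia), add_zero]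

theorem coeff_mul_derivative_eq_zero_of_eq_mul_sq {f a b w : (ZMod 2)⟦X⟧}
    (hf : f = (a ^ 4 + X * b ^ 4) * w ^ 2) (n : ℕ) :
    (f * d⁄dX (ZMod 2) f).coeff (4 * n + 2) = 0 := by
  have hsq (g : (ZMod 2)⟦X⟧) : d⁄dX (ZMod 2) (g ^ 2) = 0 := derivative_pow_char (ZMod 2) 2 g
  have hfour (g : (ZMod 2)⟦X⟧) : d⁄dX (ZMod 2) (g ^ 4) = 0 := by
    rw [pow_mul g 2 2, hsq]
  have hderiv : d⁄dX (ZMod 2) f = b ^ 4 * w ^ 2 := by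
    simp [hf, Derivation.leibniz, hsq, hfour, mul_comm]
  have hprod : f * d⁄dX (ZMod 2) f = (a * b * w) ^ 4 + X * (b ^ 2 * w) ^ 4 := by
    rw [hderiv, hf]
    ring
  rw [hprod, coeff_pow_four_add_X_mul_pow_four]

end Congruence

theorem stmt_0_general (t n : ℕ) : coloredRegular 2 3 (2 * t) (4 * n + 3) ≡ 0 [MOD 4] := by
  obtain ⟨w, hw⟩ := exists_multisetSeries_eq_hexagonalSeries_mul_sq t
  rw [hexagonalSeries_mul_expand_three] at hw
  rw [coloredRegular_eq_coeff_pow, Nat.modEq_zero_iff_dvd]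
  have hcoprime : Nat.Coprime (2 ^ 2) (4 * n + 2 + 1) := by
    rw [show 4 * n + 2 + 1 = 3 + 2 ^ 2 * n by ring, Nat.coprime_add_mul_left_right]
    decide
  refine hcoprime.dvd_of_dvd_mul_right
    (sq_dvd_mul_coeff_pow (map_natCast_multisetSeries (ZMod 2) _ _) ?_)
  rw [Nat.add_one_sub_one, pow_one]
  exact coeff_mul_derivative_eq_zero_of_eq_mul_sq hw n

theorem stmt_0 (t : ℕ) (ht : 0 < t) (h3 : ¬ 3 ∣ t) (n : ℕ) :
    coloredRegular 2 3 (2 * t) (4 * n + 3) ≡ 0 [MOD 4] :=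
  stmt_0_general t n
end

section
/- For every nonnegative integer n, b^2_{3,4}(4n+1) ≡ 2 (mod 4) if n is a triangular number (i.e. n = m(m+1)/2 for some nonnegative integer m), and b^2_{3,4}(4n+1) ≡ 0 (mod 4) otherwise. -/
/-!
Over a ring of characteristic two, let `f` be Euler's pentagonal series and
`ψ(q) = ∑ q ^ (m (m + 1) / 2)`.

The exponents of `ψ(q) ψ(q³)` are read off from the norms `x² + 3 y²` of the elements `x + y √-3`
with odd coordinates. Multiplication by a sixth root of unity induces a norm-preserving involution
on pairs `(|x|, |y|)`, and only its fixed points, `|x| = |y|` and `|x| = 3 |y|`, survive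
modulo 2. This gives `ψ(q) ψ(q³) = ψ(q⁴) + q ψ(q¹²)`. Substituting `ψ(q) = f(q³) + q ψ(q⁹)` and
comparing the exponents divisible by 3 yields `f(q) ψ(q) = f(q⁴)`.

Hence the generating function `G = f(q³) f(q⁴) / (f(q) f(q¹²))` of the partitions into parts
divisible by neither 3 nor 4 equals `ψ(q) / ψ(q³)`. Its even and odd parts are `E(q²)` and
`q O(q²)` with `E(q) = ψ(q²) / ψ(q³)` and `O(q) = ψ(q³)`, so that `E O = ψ(q²)`. Over `ℤ` the
odd part of `G²` is `2 q E(q²) O(q²)`; its coefficient at `q ^ (4 n + 1)` is therefore twice an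
integer congruent modulo 2 to the coefficient of `ψ` at `q ^ n`.
-/

open PowerSeries Finset

section CountingSeries

variable {ι κ : Type*} (R : Type*)

/-- The power series `∑ i, X ^ e i`, whose `n`-th coefficient counts the `i` with `e i = n`.
Since `Nat.card` of an infinite type is `0`, this is the intended series only if `e` has finite
fibers. -/
noncomputable def countingSeries [Semiring R] (e : ι → ℕ) : R⟦X⟧ :=
  PowerSeries.mk fun n => (Nat.card {i // e i = n} : R)

@[simp]
lemma coeff_countingSeries [Semiring R] (e : ι → ℕ) (n : ℕ) :
    (countingSeries R e).coeff n = (Nat.card {i // e i = n} : R) :=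
  coeff_mk n _

lemma coeff_countingSeries_apply [Semiring R] {e : ι → ℕ} (he : e.Injective) (i : ι) :
    (countingSeries R e).coeff (e i) = 1 := by
  have : Unique {j // e j = e i} := ⟨⟨⟨i, rfl⟩⟩, fun j => Subtype.ext (he j.2)⟩
  simp

lemma coeff_countingSeries_of_notMem_range [Semiring R] {e : ι → ℕ} {n : ℕ}
    (hn : n ∉ Set.range e) : (countingSeries R e).coeff n = 0 := by
  have : IsEmpty {i // e i = n} := ⟨fun i => hn ⟨i, i.2⟩⟩
  simp

lemma countingSeries_of_unique [Semiring R] [Unique ι] (e : ι → ℕ) :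
    countingSeries R e = X ^ e default := by
  ext n
  rw [coeff_X_pow]
  split_ifs with hn
  · rw [hn, coeff_countingSeries_apply R (Function.injective_of_subsingleton e)]
  · refine coeff_countingSeries_of_notMem_range R ?_
    rintro ⟨i, rfl⟩
    exact hn (congrArg e (Unique.eq_default i))

lemma countingSeries_comp_bijective [Semiring R] (e : ι → ℕ) {φ : κ → ι} (hφ : φ.Bijective) :
    countingSeries R (e ∘ φ) = countingSeries R e := by
  ext n
  simp only [coeff_countingSeries]
  congr 1
  exact Nat.card_congr ((Equiv.ofBijective φ hφ).subtypeEquiv fun _ => Iff.rfl)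

lemma countingSeries_sumElim [Semiring R] {e : ι → ℕ} {f : κ → ℕ}
    (he : ∀ n, Finite {i // e i = n}) (hf : ∀ n, Finite {j // f j = n}) :
    countingSeries R (Sum.elim e f) = countingSeries R e + countingSeries R f := by
  ext n
  simp only [map_add, coeff_countingSeries, ← Nat.cast_add, ← Nat.card_sum]
  congr 1
  exact Nat.card_congr Equiv.subtypeSum

/-- A pair of total weight `n` is a splitting `n = a + b` with an index of weight `a` and one of
weight `b`. -/
def fiberAddEquiv (e : ι → ℕ) (f : κ → ℕ) (n : ℕ) :
    {p : ι × κ // e p.1 + f p.2 = n} ≃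
      Σ x : antidiagonal n, {i // e i = x.1.1} × {j // f j = x.1.2} where
  toFun p := ⟨⟨(e p.1.1, f p.1.2), HasAntidiagonal.mem_antidiagonal.2 p.2⟩,
    ⟨p.1.1, rfl⟩, ⟨p.1.2, rfl⟩⟩
  invFun s := ⟨(s.2.1.1, s.2.2.1), by
    rw [s.2.1.2, s.2.2.2]; exact HasAntidiagonal.mem_antidiagonal.1 s.1.2⟩
  left_inv _ := rfl
  right_inv := by
    rintro ⟨⟨⟨a, b⟩, h⟩, ⟨i, hi : e i = a⟩, ⟨j, hj : f j = b⟩⟩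
    subst hi hj
    rfl

lemma finite_fiber_add {e : ι → ℕ} {f : κ → ℕ}
    (he : ∀ n, Finite {i // e i = n}) (hf : ∀ n, Finite {j // f j = n}) (n : ℕ) :
    Finite {p : ι × κ // e p.1 + f p.2 = n} :=
  have := he
  have := hf
  .of_equiv _ (fiberAddEquiv e f n).symm

lemma countingSeries_mul [Semiring R] {e : ι → ℕ} {f : κ → ℕ}
    (he : ∀ n, Finite {i // e i = n}) (hf : ∀ n, Finite {j // f j = n}) :
    countingSeries R e * countingSeries R f =
      countingSeries R fun p : ι × κ => e p.1 + f p.2 := by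
  ext n
  rw [coeff_mul, coeff_countingSeries, Nat.card_congr (fiberAddEquiv e f n), Nat.card_sigma,
    Finset.sum_coe_sort (antidiagonal n)
      fun x => Nat.card ({i // e i = x.1} × {j // f j = x.2})]
  simp only [coeff_countingSeries, Nat.card_prod, Nat.cast_sum, Nat.cast_mul]

lemma X_pow_mul_countingSeries [Semiring R] (k : ℕ) (e : ι → ℕ) :
    X ^ k * countingSeries R e = countingSeries R fun i => e i + k := by
  ext n
  rw [coeff_X_pow_mul']
  split_ifs with hk
  · simp only [coeff_countingSeries, eq_tsub_iff_add_eq_of_le hk]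
  · refine (coeff_countingSeries_of_notMem_range R ?_).symm
    rintro ⟨i, rfl⟩
    exact hk (Nat.le_add_left k (e i))

lemma expand_countingSeries [CommRing R] (p : ℕ) (hp : p ≠ 0) (e : ι → ℕ) :
    expand p hp (countingSeries R e) = countingSeries R fun i => p * e i := by
  ext n
  by_cases hn : p ∣ n
  · obtain ⟨m, rfl⟩ := hn
    simp only [coeff_expand_mul, coeff_countingSeries, Nat.mul_right_inj hp]
  · rw [coeff_expand_of_not_dvd _ _ _ hn, coeff_countingSeries_of_notMem_range]
    rintro ⟨i, rfl⟩
    exact hn (dvd_mul_right p (e i))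

lemma card_modEq_two_card_fixedPoints {α : Type*} [Finite α] {σ : α → α}
    (hσ : σ.Involutive) : Nat.card α ≡ Nat.card (Function.fixedPoints σ) [MOD 2] := by
  classical
  have := Fintype.ofFinite α
  have hσ_pow : (show Function.End α from σ) ^ 2 ^ 1 = 1 := funext hσ
  simpa only [Nat.card_eq_fintype_card] using Equiv.Perm.card_fixedPoints_modEq hσ_pow

lemma countingSeries_eq_of_involutive [Ring R] [CharP R 2] {e : ι → ℕ} {σ : ι → ι} {τ : κ → ι}
    (he : ∀ n, Finite {i // e i = n}) (hσ : σ.Involutive) (he_σ : ∀ i, e (σ i) = e i)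
    (hτ : τ.Injective) (hfix : ∀ i, σ i = i ↔ i ∈ Set.range τ) :
    countingSeries R e = countingSeries R (e ∘ τ) := by
  ext n
  let σ' : {i // e i = n} → {i // e i = n} := Subtype.map σ fun i hi => (he_σ i).trans hi
  have hσ' : σ'.Involutive := fun i => Subtype.ext (hσ i)
  let τ' : {j // e (τ j) = n} → Function.fixedPoints σ' :=
    fun j => ⟨⟨τ j, j.2⟩, Subtype.ext ((hfix _).2 ⟨j, rfl⟩)⟩
  have hτ' : τ'.Bijective := by
    refine ⟨fun j j' h => Subtype.ext (hτ congr($h.1.1)), ?_⟩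
    rintro ⟨⟨i, hi⟩, h⟩
    obtain ⟨j, rfl⟩ := (hfix i).1 congr($h.1)
    exact ⟨⟨j, hi⟩, rfl⟩
  simp only [coeff_countingSeries, Function.comp_apply, Nat.card_eq_of_bijective τ' hτ']
  exact (CharP.natCast_eq_natCast R 2).2 (card_modEq_two_card_fixedPoints hσ')

lemma countingSeries_sq [CommRing R] [CharP R 2] {e : ι → ℕ} (he : ∀ n, Finite {i // e i = n}) :
    countingSeries R e ^ 2 = expand 2 two_ne_zero (countingSeries R e) := by
  rw [pow_two, countingSeries_mul R he he, expand_countingSeries,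
    countingSeries_eq_of_involutive R (finite_fiber_add he he) (σ := Prod.swap)
      (τ := fun i => (i, i)) Prod.swap_swap (fun p => add_comm _ _)
      (fun i j h => congr($h.1))]
  · simp only [Function.comp_def, two_mul]
  · rintro ⟨i, j⟩
    simp [eq_comm]

end CountingSeries

section Dissect

variable {R : Type*}

/-- The `r`-th component of the `m`-dissection of a power series, that is,
`∑ aₙ Xⁿ ↦ ∑ a₍ₘₙ₊ᵣ₎ Xⁿ`. -/
noncomputable def dissect [Semiring R] (m r : ℕ) : R⟦X⟧ →ₗ[R] R⟦X⟧ where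
  toFun F := PowerSeries.mk fun n => F.coeff (m * n + r)
  map_add' F G := by ext; simp
  map_smul' c F := by ext; simp

@[simp]
lemma coeff_dissect [Semiring R] (m r n : ℕ) (F : R⟦X⟧) :
    (dissect m r F).coeff n = F.coeff (m * n + r) :=
  coeff_mk n fun n => F.coeff (m * n + r)

lemma map_dissect {S : Type*} [Semiring R] [Semiring S] (φ : R →+* S) (m r : ℕ) (F : R⟦X⟧) :
    map φ (dissect m r F) = dissect m r (map φ F) := by
  ext n
  simp

variable [CommRing R]

lemma dissect_expand_mul {m r : ℕ} (hm : m ≠ 0) (hr : r < m) (F G : R⟦X⟧) :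
    dissect m r (expand m hm F * G) = F * dissect m r G := by
  ext n
  simp only [coeff_dissect, coeff_mul]
  symm
  refine Finset.sum_of_injOn (fun x => (m * x.1, m * x.2 + r)) ?_ ?_ ?_ ?_
  · rintro ⟨i, j⟩ - ⟨i', j'⟩ - h
    simpa [hm] using h
  · rintro ⟨i, j⟩ h
    simp only [mem_coe, HasAntidiagonal.mem_antidiagonal] at h ⊢
    rw [← h]
    ring
  · rintro ⟨i, j⟩ hij hnot
    rw [HasAntidiagonal.mem_antidiagonal] at hij
    refine mul_eq_zero_of_left (coeff_expand_of_not_dvd m hm F ?_) _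
    rintro ⟨i', rfl⟩
    have hi' : i' ≤ n := by
      by_contra! h
      nlinarith
    obtain ⟨j', rfl⟩ := Nat.exists_eq_add_of_le hi'
    refine hnot ⟨(i', j'), by simp, ?_⟩
    simp only [Prod.mk.injEq, true_and]
    linarith
  · rintro ⟨i, j⟩ -
    simp

lemma dissect_expand_mul_X_pow {m r i : ℕ} (hm : m ≠ 0) (hr : r < m) (hi : i < m) (F : R⟦X⟧) :
    dissect m r (expand m hm F * X ^ i) = if i = r then F else 0 := by
  have h : dissect m r (X ^ i : R⟦X⟧) = if i = r then 1 else 0 := by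
    ext n
    have hn : m * n + r = i ↔ i = r ∧ n = 0 := by
      rcases n with _ | n
      · simp [eq_comm]
      · have : m ≤ m * (n + 1) := Nat.le_mul_of_pos_right m n.succ_pos
        lia
    rw [coeff_dissect, coeff_X_pow, if_congr hn rfl rfl]
    by_cases hir : i = r <;> simp [coeff_one, hir]
  rw [dissect_expand_mul hm hr, h, mul_ite, mul_one, mul_zero]

lemma dissect_zero_expand_add {m : ℕ} (hm : 1 < m) (F G : R⟦X⟧) :
    dissect m 0 (expand m hm.ne_bot F + X * expand m hm.ne_bot G) = F := by
  have hF := dissect_expand_mul_X_pow hm.ne_bot (r := 0) (i := 0) (by lia) (by lia) F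
  have hG := dissect_expand_mul_X_pow hm.ne_bot (r := 0) (i := 1) (by lia) hm G
  rw [map_add, mul_comm X]
  simpa using congr($hF + $hG)

lemma dissect_one_expand_add {m : ℕ} (hm : 1 < m) (F G : R⟦X⟧) :
    dissect m 1 (expand m hm.ne_bot F + X * expand m hm.ne_bot G) = G := by
  have hF := dissect_expand_mul_X_pow hm.ne_bot (r := 1) (i := 0) (by lia) (by lia) F
  have hG := dissect_expand_mul_X_pow hm.ne_bot (r := 1) (i := 1) (by lia) hm G
  rw [map_add, mul_comm X]
  simpa using congr($hF + $hG)

lemma eq_of_dissect_eq {m : ℕ} (hm : m ≠ 0) {F G : R⟦X⟧}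
    (h : ∀ r < m, dissect m r F = dissect m r G) : F = G := by
  ext n
  have hn := congr(($(h (n % m) (n.mod_lt (Nat.pos_of_ne_zero hm)))).coeff (n / m))
  rwa [coeff_dissect, coeff_dissect, Nat.div_add_mod] at hn

lemma sum_expand_dissect_mul_X_pow {m : ℕ} (hm : m ≠ 0) (F : R⟦X⟧) :
    ∑ r ∈ range m, expand m hm (dissect m r F) * X ^ r = F := by
  refine eq_of_dissect_eq hm fun s hs => ?_
  calc dissect m s (∑ r ∈ range m, expand m hm (dissect m r F) * X ^ r)
      = ∑ r ∈ range m, if r = s then dissect m r F else 0 := by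
        rw [map_sum]
        exact sum_congr rfl fun r hr => dissect_expand_mul_X_pow hm hs (mem_range.1 hr) _
    _ = dissect m s F := by rw [sum_ite_eq', if_pos (mem_range.2 hs)]

lemma dissect_two_one_sq (F : R⟦X⟧) :
    dissect 2 1 (F ^ 2) = 2 * (dissect 2 0 F * dissect 2 1 F) := by
  set E := dissect 2 0 F
  set O := dissect 2 1 F
  have hF : expand 2 two_ne_zero E + X * expand 2 two_ne_zero O = F := by
    simpa only [sum_range_succ, sum_range_zero, zero_add, pow_zero, pow_one, mul_one, mul_comm X]
      using sum_expand_dissect_mul_X_pow two_ne_zero F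
  have hsq : F ^ 2 = expand 2 two_ne_zero (E ^ 2 + X * O ^ 2) +
      X * expand 2 two_ne_zero (2 * (E * O)) := by
    simp only [← hF, map_add, map_mul, map_pow, expand_X, map_ofNat]
    ring
  rw [hsq, dissect_one_expand_add one_lt_two]

end Dissect

section Theta

/-- The triangular number `0 + 1 + ⋯ + m`. -/
def triangular (m : ℕ) : ℕ := m * (m + 1) / 2

lemma two_mul_triangular (m : ℕ) : 2 * triangular m = m * (m + 1) :=
  Nat.two_mul_div_two_of_even (Nat.even_mul_succ_self m)

lemma triangular_injective : triangular.Injective := by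
  refine StrictMono.injective (strictMono_nat_of_lt_succ fun m => ?_)
  have h := two_mul_triangular m
  have h' := two_mul_triangular (m + 1)
  lia

lemma finite_fiber_of_injective {ι κ : Type*} {e : ι → κ} (he : e.Injective) (n : κ) :
    Finite {i // e i = n} :=
  have : Subsingleton {i // e i = n} := ⟨fun i j => Subtype.ext (he (i.2.trans j.2.symm))⟩
  inferInstance

lemma finite_fiber_mul_triangular_add {k : ℕ} (hk : k ≠ 0) (c n : ℕ) :
    Finite {m // k * triangular m + c = n} :=
  finite_fiber_of_injective (fun a b h => triangular_injective (by simpa [hk] using h)) n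

lemma two_mul_eq_mul_succ_iff {n : ℕ} :
    (∃ m, 2 * n = m * (m + 1)) ↔ n ∈ Set.range triangular := by
  refine exists_congr fun m => ?_
  rw [← two_mul_triangular, Nat.mul_right_inj two_ne_zero, eq_comm]

lemma eight_mul_triangular_add_one (m : ℕ) : 8 * triangular m + 1 = (2 * m + 1) ^ 2 := by
  linear_combination 4 * two_mul_triangular m

/-- The reflection behind `triangularSeries_mul_expand_three`. Writing `x = 2a + 1` and
`y = 2b + 1`, it multiplies `x + y√-3` by whichever of the sixth roots of unity `(1 ± √-3)/2`
keeps both coordinates odd integers, and then takes absolute values of the coordinates. -/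
def sixthTurn (p : ℕ × ℕ) : ℕ × ℕ :=
  if p.1 % 2 = p.2 % 2 then (Nat.dist p.1 (3 * p.2 + 1) / 2, (p.1 + p.2) / 2)
  else ((p.1 + (3 * p.2 + 1)) / 2, Nat.dist p.1 p.2 / 2)

lemma sixthTurn_involutive : sixthTurn.Involutive := by
  rintro ⟨a, b⟩
  unfold sixthTurn Nat.dist
  obtain hab | hab := le_total a b <;>
    obtain ⟨k, rfl⟩ := Nat.exists_eq_add_of_le hab <;>
    obtain ⟨c, rfl | rfl⟩ := k.even_or_odd' <;>
    split_ifs <;> simp only [Prod.mk.injEq] at * <;> omega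

lemma sixthTurn_eq_self_iff (a b : ℕ) :
    sixthTurn (a, b) = (a, b) ↔ a = b ∨ a = 3 * b + 1 := by
  unfold sixthTurn Nat.dist
  split_ifs <;> simp only [Prod.mk.injEq] at * <;> omega

lemma triangular_add_three_mul_triangular_sixthTurn (p : ℕ × ℕ) :
    triangular (sixthTurn p).1 + 3 * triangular (sixthTurn p).2 =
      triangular p.1 + 3 * triangular p.2 := by
  obtain ⟨a, b⟩ := p
  have norm_eq : ∀ c d : ℕ, 8 * (triangular c + 3 * triangular d : ℤ) + 4 =
      (2 * c + 1) ^ 2 + 3 * (2 * d + 1) ^ 2 := fun c d => by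
    have hc := eight_mul_triangular_add_one c
    have hd := eight_mul_triangular_add_one d
    zify at hc hd
    linear_combination hc + 3 * hd
  suffices h : (2 * (sixthTurn (a, b)).1 + 1 : ℤ) ^ 2 + 3 * (2 * (sixthTurn (a, b)).2 + 1) ^ 2 =
      (2 * a + 1) ^ 2 + 3 * (2 * b + 1) ^ 2 by
    rw [← norm_eq, ← norm_eq] at h
    zify
    linarith
  unfold sixthTurn Nat.dist
  split_ifs with hab <;> dsimp only at hab ⊢
  · have hx : (2 * ((a - (3 * b + 1) + (3 * b + 1 - a)) / 2 : ℕ) + 1 : ℤ) ^ 2 =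
        (a - (3 * b + 1)) ^ 2 := sq_eq_sq_iff_eq_or_eq_neg.2 (by omega)
    have hy : (2 * ((a + b) / 2 : ℕ) + 1 : ℤ) = a + b + 1 := by omega
    rw [hx, hy]
    ring
  · have hx : (2 * ((a + (3 * b + 1)) / 2 : ℕ) + 1 : ℤ) = a + (3 * b + 1) + 1 := by omega
    have hy : (2 * ((a - b + (b - a)) / 2 : ℕ) + 1 : ℤ) ^ 2 = (a - b) ^ 2 :=
      sq_eq_sq_iff_eq_or_eq_neg.2 (by omega)
    rw [hx, hy]
    ring

section Semiring

variable (R : Type*) [Semiring R]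

/-- Ramanujan's theta function `ψ(q) = ∑ q ^ (m * (m + 1) / 2)`. -/
noncomputable def triangularSeries : R⟦X⟧ := countingSeries R triangular

lemma coeff_triangularSeries_of_mem_range {n : ℕ} (hn : n ∈ Set.range triangular) :
    (triangularSeries R).coeff n = 1 := by
  obtain ⟨m, rfl⟩ := hn
  exact coeff_countingSeries_apply R triangular_injective m

lemma coeff_triangularSeries_of_notMem_range {n : ℕ} (hn : n ∉ Set.range triangular) :
    (triangularSeries R).coeff n = 0 :=
  coeff_countingSeries_of_notMem_range R hn

end Semiring

variable (R : Type*) [CommRing R]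

lemma isUnit_triangularSeries : IsUnit (triangularSeries R) := by
  rw [PowerSeries.isUnit_iff_constantCoeff, ← coeff_zero_eq_constantCoeff_apply,
    coeff_triangularSeries_of_mem_range R (n := 0) ⟨0, rfl⟩]
  exact isUnit_one

lemma isUnit_pentagonalSeries : IsUnit (pentagonalSeries R) := by
  have h : (pentagonalSeries R).coeff 0 = 1 := by
    simpa [pentagonal_def, -coeff_zero_eq_constantCoeff] using
      coeff_pentagonalSeries_pentagonal R 0
  rw [PowerSeries.isUnit_iff_constantCoeff, ← coeff_zero_eq_constantCoeff_apply, h]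
  exact isUnit_one

variable [CharP R 2]

lemma pentagonalSeries_eq_countingSeries : pentagonalSeries R = countingSeries R pentagonal := by
  ext n
  by_cases hn : n ∈ Set.range pentagonal
  · obtain ⟨k, rfl⟩ := hn
    rw [coeff_pentagonalSeries_pentagonal, coeff_countingSeries_apply R pentagonal_injective]
    obtain hk | hk := k.even_or_odd
    · simp [Int.negOnePow_even k hk]
    · simp [Int.negOnePow_odd k hk, CharTwo.neg_eq]
  · rw [coeff_pentagonalSeries_eq_zero R hn, coeff_countingSeries_of_notMem_range R hn]

/-- The index `m` with `triangular m = 3 * pentagonal j`. -/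
def tripledPentagonalIndex (j : ℤ) : ℕ := (max (-3 * j) (3 * j - 1)).toNat

lemma triangular_tripledPentagonalIndex (j : ℤ) :
    triangular (tripledPentagonalIndex j) = 3 * pentagonal j := by
  have ht := two_mul_triangular (tripledPentagonalIndex j)
  have hp := two_mul_natCast_pentagonal j
  zify at ht ⊢
  have hm : (tripledPentagonalIndex j : ℤ) = -3 * j ∨
      (tripledPentagonalIndex j : ℤ) = 3 * j - 1 := by
    unfold tripledPentagonalIndex
    omega
  obtain hm | hm := hm <;> rw [hm] at ht <;> linarith

lemma triangular_three_mul_add_one (b : ℕ) : triangular (3 * b + 1) = 9 * triangular b + 1 := by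
  have h := two_mul_triangular b
  have h' := two_mul_triangular (3 * b + 1)
  linarith

lemma bijective_sumElim_tripledPentagonalIndex :
    (Sum.elim tripledPentagonalIndex fun b : ℕ => 3 * b + 1).Bijective := by
  constructor
  · rintro (j | b) (j' | b') h <;>
      simp only [Sum.elim_inl, Sum.elim_inr, tripledPentagonalIndex, Sum.inl.injEq,
        Sum.inr.injEq, reduceCtorEq] at h ⊢ <;> omega
  · intro m
    have hm : m % 3 = 0 ∨ m % 3 = 1 ∨ m % 3 = 2 := by omega
    obtain hm | hm | hm := hm
    · exact ⟨.inl (-(m / 3)), by simp only [Sum.elim_inl, tripledPentagonalIndex]; omega⟩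
    · exact ⟨.inr (m / 3), by simp only [Sum.elim_inr]; omega⟩
    · exact ⟨.inl (m / 3 + 1), by simp only [Sum.elim_inl, tripledPentagonalIndex]; omega⟩

lemma triangularSeries_three_dissection :
    triangularSeries R = expand 3 three_ne_zero (pentagonalSeries R) +
      X * expand 9 (by norm_num) (triangularSeries R) := by
  have hpent (n) : Finite {j // 3 * pentagonal j = n} :=
    finite_fiber_of_injective (fun i j h => pentagonal_injective (by simpa using h)) n
  rw [triangularSeries, pentagonalSeries_eq_countingSeries, expand_countingSeries,
    expand_countingSeries, ← pow_one X, X_pow_mul_countingSeries,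
    ← countingSeries_sumElim R hpent (finite_fiber_mul_triangular_add (by norm_num) 1),
    ← countingSeries_comp_bijective R triangular bijective_sumElim_tripledPentagonalIndex,
    Sum.comp_elim]
  simp only [Function.comp_def, triangular_tripledPentagonalIndex, triangular_three_mul_add_one]

lemma triangularSeries_mul_expand_three :
    triangularSeries R * expand 3 three_ne_zero (triangularSeries R) =
      expand 4 four_ne_zero (triangularSeries R) +
        X * expand 12 (by norm_num) (triangularSeries R) := by
  have htri := finite_fiber_of_injective triangular_injective
  have htri_three : ∀ n, Finite {m // 3 * triangular m = n} :=
    finite_fiber_mul_triangular_add three_ne_zero 0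
  have hfour : ∀ n, Finite {m // 4 * triangular m = n} :=
    finite_fiber_mul_triangular_add four_ne_zero 0
  let diagonals : ℕ ⊕ ℕ → ℕ × ℕ := Sum.elim (fun b => (b, b)) (fun b => (3 * b + 1, b))
  have hinj : diagonals.Injective := by
    rintro (b | b) (b' | b') h <;>
      simp only [diagonals, Sum.elim_inl, Sum.elim_inr, Prod.mk.injEq, Sum.inl.injEq,
        Sum.inr.injEq, reduceCtorEq] at h ⊢ <;> omega
  have hfix (p) : sixthTurn p = p ↔ p ∈ Set.range diagonals := by
    obtain ⟨a, b⟩ := p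
    rw [sixthTurn_eq_self_iff]
    simp only [diagonals, Set.mem_range, Sum.exists, Sum.elim_inl, Sum.elim_inr, Prod.mk.injEq,
      exists_eq_left, exists_eq_right, eq_comm (a := a)]
  rw [triangularSeries, expand_countingSeries, expand_countingSeries, expand_countingSeries,
    countingSeries_mul R htri htri_three, ← pow_one X, X_pow_mul_countingSeries,
    ← countingSeries_sumElim R hfour (finite_fiber_mul_triangular_add (by norm_num) 1),
    countingSeries_eq_of_involutive R (finite_fiber_add htri htri_three) sixthTurn_involutive
      triangular_add_three_mul_triangular_sixthTurn hinj hfix, Sum.comp_elim]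
  congr 2 <;> funext b
  · simp only [Function.comp_apply]
    ring
  · simp only [Function.comp_apply, triangular_three_mul_add_one]
    ring

lemma pentagonalSeries_mul_triangularSeries :
    pentagonalSeries R * triangularSeries R = expand 4 four_ne_zero (pentagonalSeries R) := by
  set f := pentagonalSeries R
  set ψ := triangularSeries R
  have hψ : ψ = expand 3 three_ne_zero f + X * expand 9 (by norm_num) ψ :=
    triangularSeries_three_dissection R
  have hlhs : ψ * expand 3 three_ne_zero ψ = expand 3 three_ne_zero ψ *
      (expand 3 three_ne_zero f + X * expand 3 three_ne_zero (expand 3 three_ne_zero ψ)) := by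
    rw [← expand_mul, ← hψ, mul_comm]
  have hrhs : expand 4 four_ne_zero ψ + X * expand 12 (by norm_num) ψ =
      expand 3 three_ne_zero (expand 4 four_ne_zero f) +
        X * expand 3 three_ne_zero (X * expand 12 (by norm_num) ψ + expand 4 four_ne_zero ψ) := by
    nth_rw 1 [hψ]
    simp only [map_add, map_mul, ← expand_mul, expand_X]
    ring
  have h : ψ * f = expand 4 four_ne_zero f := by
    have h3 : 1 < 3 := by norm_num
    rw [← dissect_zero_expand_add h3 (expand 4 four_ne_zero f), ← hrhs,
      ← triangularSeries_mul_expand_three, hlhs, dissect_expand_mul three_ne_zero three_pos,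
      dissect_zero_expand_add h3]
  rw [mul_comm, h]

end Theta

section RegularPartitions

/-- The generating function of the partitions into parts divisible by neither `l` nor `m`. -/
noncomputable def regularSeries (R : Type*) [Semiring R] (l m : ℕ) : R⟦X⟧ :=
  PowerSeries.mk fun n => (#(Nat.Partition.restricted n fun i => ¬ l ∣ i ∧ ¬ m ∣ i) : R)

lemma map_regularSeries {R S : Type*} [Semiring R] [Semiring S] (φ : R →+* S) (l m : ℕ) :
    map φ (regularSeries R l m) = regularSeries S l m := by
  ext n
  simp [regularSeries]

open PowerSeries.WithPiTopology

variable (R : Type*) [CommRing R]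

lemma continuous_expand [TopologicalSpace R] {p : ℕ} (hp : p ≠ 0) :
    Continuous (expand p hp : R⟦X⟧ → R⟦X⟧) := by
  refine continuous_iff_continuousAt.2 fun F => ?_
  rw [ContinuousAt, tendsto_iff_coeff_tendsto]
  intro d
  simp only [coeff_expand]
  split_ifs
  · exact (continuous_coeff R _).continuousAt
  · exact tendsto_const_nhds

lemma hasProd_expand_pentagonalSeries [TopologicalSpace R] [IsTopologicalRing R] {p : ℕ}
    (hp : p ≠ 0) :
    HasProd (fun i => if p ∣ i + 1 then (1 - X ^ (i + 1) : R⟦X⟧) else 1)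
      (expand p hp (pentagonalSeries R)) := by
  have hexpand := (hasProd_one_sub_X_pow R).map (expand p hp) (continuous_expand R hp)
  have hsucc (i : ℕ) : p * (i + 1) - 1 + 1 = p * (i + 1) :=
    Nat.sub_add_cancel (Nat.mul_pos (Nat.pos_of_ne_zero hp) i.succ_pos)
  have hinj : (fun i : ℕ => p * (i + 1) - 1).Injective := fun i j hij => by
    have h : p * (i + 1) = p * (j + 1) := by rw [← hsucc i, ← hsucc j]; exact congr($hij + 1)
    simpa [hp] using h
  rw [← hinj.hasProd_iff]
  · refine hexpand.congr_fun fun i => ?_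
    simp [hsucc, pow_mul]
  · intro i hi
    refine if_neg ?_
    rintro ⟨_ | k, hk⟩
    · simp at hk
    · exact hi ⟨k, by simp only [← hk, Nat.add_sub_cancel]⟩

lemma regularSeries_mul_pentagonalSeries {l m : ℕ} (hl : l ≠ 0)
    (hm : m ≠ 0) (hlm : l.Coprime m) :
    regularSeries R l m * pentagonalSeries R *
        expand (l * m) (mul_ne_zero hl hm) (pentagonalSeries R) =
      expand l hl (pentagonalSeries R) * expand m hm (pentagonalSeries R) := by
  let _ : TopologicalSpace R := ⊥
  have : DiscreteTopology R := ⟨rfl⟩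
  have hlhs := ((Nat.Partition.hasProd_powerSeriesMk_card_restricted R
    fun i => ¬ l ∣ i ∧ ¬ m ∣ i).mul (hasProd_one_sub_X_pow R)).mul
      (hasProd_expand_pentagonalSeries R (mul_ne_zero hl hm))
  have hrhs := (hasProd_expand_pentagonalSeries R hl).mul (hasProd_expand_pentagonalSeries R hm)
  refine HasProd.unique (hlhs.congr_fun fun i => ?_) hrhs
  have hgeom : (∑' j : ℕ, (X : R⟦X⟧) ^ ((i + 1) * j)) * (1 - X ^ (i + 1)) = 1 := by
    simp_rw [pow_mul]
    exact tsum_pow_mul_one_sub_of_constantCoeff_eq_zero (by simp)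
  have hdvd : l * m ∣ i + 1 ↔ l ∣ i + 1 ∧ m ∣ i + 1 :=
    ⟨fun h => ⟨dvd_of_mul_right_dvd h, dvd_of_mul_left_dvd h⟩,
      fun h => hlm.mul_dvd_of_dvd_of_dvd h.1 h.2⟩
  by_cases hli : l ∣ i + 1 <;> by_cases hmi : m ∣ i + 1 <;>
    simp [hdvd, hli, hmi, hgeom]

variable [CharP R 2]

lemma regularSeries_mul_expand_triangularSeries :
    regularSeries R 3 4 * expand 3 three_ne_zero (triangularSeries R) = triangularSeries R := by
  set G := regularSeries R 3 4
  set f := pentagonalSeries R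
  set ψ := triangularSeries R
  have hG : G * f * expand 12 (by norm_num) f =
      expand 3 three_ne_zero f * expand 4 four_ne_zero f :=
    regularSeries_mul_pentagonalSeries R three_ne_zero four_ne_zero (by norm_num)
  have hf : f * ψ = expand 4 four_ne_zero f := pentagonalSeries_mul_triangularSeries R
  have hf_three : expand 3 three_ne_zero f * expand 3 three_ne_zero ψ =
      expand 12 (by norm_num) f := by
    rw [← map_mul, hf, ← expand_mul]
  have hunit : IsUnit (f * expand 3 three_ne_zero f) :=
    (isUnit_pentagonalSeries R).mul ((isUnit_pentagonalSeries R).map (expand 3 three_ne_zero))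
  refine hunit.mul_left_cancel ?_
  calc f * expand 3 three_ne_zero f * (G * expand 3 three_ne_zero ψ)
      = G * f * (expand 3 three_ne_zero f * expand 3 three_ne_zero ψ) := by ring
    _ = expand 3 three_ne_zero f * (f * ψ) := by rw [hf_three, hG, hf]
    _ = f * expand 3 three_ne_zero f * ψ := by ring

lemma expand_two_triangularSeries :
    expand 2 two_ne_zero (triangularSeries R) = triangularSeries R ^ 2 :=
  (countingSeries_sq R (finite_fiber_of_injective triangular_injective)).symm

lemma expand_six_triangularSeries_mul_regularSeries :
    expand 2 two_ne_zero (expand 3 three_ne_zero (triangularSeries R)) * regularSeries R 3 4 =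
      expand 2 two_ne_zero (expand 2 two_ne_zero (triangularSeries R)) +
        X * expand 2 two_ne_zero (expand 3 three_ne_zero (triangularSeries R) ^ 2) := by
  set ψ := triangularSeries R
  calc expand 2 two_ne_zero (expand 3 three_ne_zero ψ) * regularSeries R 3 4
      = expand 3 three_ne_zero (expand 2 two_ne_zero ψ) * regularSeries R 3 4 := by
        simp only [← expand_mul, Nat.reduceMul]
    _ = expand 3 three_ne_zero ψ * (regularSeries R 3 4 * expand 3 three_ne_zero ψ) := by
        rw [expand_two_triangularSeries, map_pow]
        ring
    _ = expand 4 four_ne_zero ψ + X * expand 12 (by norm_num) ψ := by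
        rw [regularSeries_mul_expand_triangularSeries, mul_comm, triangularSeries_mul_expand_three]
    _ = _ := by
        rw [← map_pow, ← expand_two_triangularSeries]
        simp only [← expand_mul, Nat.reduceMul, ψ]

lemma dissect_two_zero_mul_dissect_two_one_regularSeries :
    dissect 2 0 (regularSeries R 3 4) * dissect 2 1 (regularSeries R 3 4) =
      expand 2 two_ne_zero (triangularSeries R) := by
  set ψ := triangularSeries R
  have hdissect := expand_six_triangularSeries_mul_regularSeries R
  have heven : expand 3 three_ne_zero ψ * dissect 2 0 (regularSeries R 3 4) =
      expand 2 two_ne_zero ψ := by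
    rw [← dissect_expand_mul two_ne_zero two_pos, hdissect, dissect_zero_expand_add one_lt_two]
  have hodd : expand 3 three_ne_zero ψ * dissect 2 1 (regularSeries R 3 4) =
      expand 3 three_ne_zero ψ * expand 3 three_ne_zero ψ := by
    rw [← dissect_expand_mul two_ne_zero one_lt_two, hdissect, dissect_one_expand_add one_lt_two,
      pow_two]
  have hunit : IsUnit (expand 3 three_ne_zero ψ) :=
    (isUnit_triangularSeries R).map (expand 3 three_ne_zero)
  rw [hunit.mul_left_cancel hodd, mul_comm, heven]

end RegularPartitions

section ColoredPartitions

/-- Finite multisets of parts satisfying `p`, each part carrying one of the colors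
`0, …, k - 1`. -/
abbrev ColoredParts (p : ℕ → Prop) (k : ℕ) :=
  {M : Multiset (ℕ × ℕ) // ∀ x ∈ M, p x.1 ∧ x.2 < k}

/-- The sum of the parts of a colored multiset of parts. -/
def ColoredParts.weight {p : ℕ → Prop} {k : ℕ} (M : ColoredParts p k) : ℕ :=
  (M.1.map Prod.fst).sum

variable {p : ℕ → Prop}

instance : Unique (ColoredParts p 0) where
  default := ⟨0, by simp⟩
  uniq M := Subtype.ext <|
    Multiset.eq_zero_of_forall_notMem fun x hx => Nat.not_lt_zero _ (M.2 x hx).2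

/-- Separates the parts of the last color from the others. -/
def ColoredParts.splitLast (p : ℕ → Prop) (k : ℕ) :
    ColoredParts p (k + 1) ≃ ColoredParts p k × {A : Multiset ℕ // ∀ i ∈ A, p i} where
  toFun M := (⟨M.1.filter (·.2 < k), fun x hx => by
      rw [Multiset.mem_filter] at hx
      exact ⟨(M.2 x hx.1).1, hx.2⟩⟩,
    ⟨(M.1.filter (¬ ·.2 < k)).map Prod.fst, fun i hi => by
      obtain ⟨x, hx, rfl⟩ := Multiset.mem_map.1 hi
      exact (M.2 x (Multiset.mem_filter.1 hx).1).1⟩)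
  invFun NA := ⟨NA.1.1 + NA.2.1.map (·, k), fun x hx => by
    obtain hx | hx := Multiset.mem_add.1 hx
    · exact ⟨(NA.1.2 x hx).1, (NA.1.2 x hx).2.trans k.lt_succ_self⟩
    · obtain ⟨i, hi, rfl⟩ := Multiset.mem_map.1 hx
      exact ⟨NA.2.2 i hi, k.lt_succ_self⟩⟩
  left_inv M := by
    refine Subtype.ext ?_
    have hlast : ((M.1.filter (¬ ·.2 < k)).map Prod.fst).map (·, k) = M.1.filter (¬ ·.2 < k) := by
      rw [Multiset.map_map]
      refine (Multiset.map_congr rfl fun x hx => ?_).trans (Multiset.map_id _)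
      rw [Multiset.mem_filter] at hx
      exact Prod.ext rfl (le_antisymm (not_lt.1 hx.2) (Nat.lt_succ_iff.1 (M.2 x hx.1).2))
    exact (congrArg _ hlast).trans (Multiset.filter_add_not _ _)
  right_inv := by
    rintro ⟨N, A⟩
    have hN (x) (hx : x ∈ N.1) : x.2 < k := (N.2 x hx).2
    refine Prod.ext (Subtype.ext ?_) (Subtype.ext ?_)
    · simpa [Multiset.filter_add, Multiset.filter_map, Multiset.filter_eq_self] using hN
    · simpa [Multiset.filter_add, Multiset.filter_map, Multiset.filter_eq_nil,
        Multiset.map_map] using hN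

lemma ColoredParts.weight_splitLast_symm {k : ℕ}
    (NA : ColoredParts p k × {A : Multiset ℕ // ∀ i ∈ A, p i}) :
    ((splitLast p k).symm NA).weight = NA.1.weight + NA.2.1.sum := by
  simp [splitLast, weight]

/-- A multiset of positive integers with sum `n` is a partition of `n`. -/
def restrictedEquiv [DecidablePred p] (hp : ¬ p 0) (n : ℕ) :
    {A : {A : Multiset ℕ // ∀ i ∈ A, p i} // A.1.sum = n} ≃ Nat.Partition.restricted n p where
  toFun A := ⟨⟨A.1.1, fun {i} hi => Nat.pos_of_ne_zero fun h => hp (h ▸ A.1.2 i hi), A.2⟩,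
    mem_filter.2 ⟨mem_univ _, A.1.2⟩⟩
  invFun P := ⟨⟨P.1.parts, (mem_filter.1 P.2).2⟩, P.1.parts_sum⟩
  left_inv _ := rfl
  right_inv _ := rfl

lemma finite_fiber_sum (hp : ¬ p 0) (n : ℕ) :
    Finite {A : {A : Multiset ℕ // ∀ i ∈ A, p i} // A.1.sum = n} := by
  classical exact .of_equiv _ (restrictedEquiv hp n).symm

lemma ColoredParts.finite_fiber_weight (hp : ¬ p 0) (k n : ℕ) :
    Finite {M : ColoredParts p k // M.weight = n} := by
  induction k generalizing n with
  | zero =>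
    infer_instance
  | succ k ih =>
    have := finite_fiber_add ih (finite_fiber_sum hp) n
    exact .of_equiv _ ((splitLast p k).symm.subtypeEquiv fun NA => by rw [weight_splitLast_symm])

lemma ColoredParts.countingSeries_weight (R : Type*) [Semiring R] [DecidablePred p] (hp : ¬ p 0)
    (k : ℕ) :
    countingSeries R (weight : ColoredParts p k → ℕ) =
      (PowerSeries.mk fun n => (#(Nat.Partition.restricted n p) : R)) ^ k := by
  have hone : countingSeries R (fun A : {A : Multiset ℕ // ∀ i ∈ A, p i} => A.1.sum) =
      PowerSeries.mk fun n => (#(Nat.Partition.restricted n p) : R) := by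
    ext n
    simp [Nat.card_congr (restrictedEquiv hp n)]
  induction k with
  | zero =>
    rw [countingSeries_of_unique, pow_zero]
    exact pow_zero X
  | succ k ih =>
    rw [pow_succ, ← ih, ← hone,
      countingSeries_mul R (finite_fiber_weight hp k) (finite_fiber_sum hp),
      ← countingSeries_comp_bijective R weight (splitLast p k).symm.bijective]
    congr 1
    exact funext weight_splitLast_symm

lemma mk_coloredRegular (R : Type*) [Semiring R] (k l m : ℕ) :
    PowerSeries.mk (fun n => (coloredRegular k l m n : R)) = regularSeries R l m ^ k := by
  rw [regularSeries, ← ColoredParts.countingSeries_weight R (by simp)]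
  ext n
  rw [coeff_mk, coeff_countingSeries]
  congr 1
  exact Nat.card_congr ⟨fun M => ⟨⟨M.1, fun x hx => and_assoc.2 (M.2.1 x hx)⟩, M.2.2⟩,
    fun M => ⟨M.1.1, fun x hx => and_assoc.1 (M.1.2 x hx), M.2⟩, fun _ => rfl, fun _ => rfl⟩

end ColoredPartitions

lemma exists_coloredRegular_four_mul_add_one_eq (n : ℕ) :
    ∃ K : ℤ, (coloredRegular 2 3 4 (4 * n + 1) : ℤ) = 2 * K ∧
      (K : ZMod 2) = (triangularSeries (ZMod 2)).coeff n := by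
  set G := regularSeries ℤ 3 4
  refine ⟨(dissect 2 0 G * dissect 2 1 G).coeff (2 * n), ?_, ?_⟩
  · calc (coloredRegular 2 3 4 (4 * n + 1) : ℤ)
        = (dissect 2 1 (G ^ 2)).coeff (2 * n) := by
          rw [← mk_coloredRegular, coeff_dissect, coeff_mk]
          congr 2
          ring
      _ = 2 * (dissect 2 0 G * dissect 2 1 G).coeff (2 * n) := by
          rw [dissect_two_one_sq, ← map_ofNat C 2, coeff_C_mul]
  · calc (((dissect 2 0 G * dissect 2 1 G).coeff (2 * n) : ℤ) : ZMod 2)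
        = (map (Int.castRingHom (ZMod 2)) (dissect 2 0 G * dissect 2 1 G)).coeff (2 * n) := by
          rw [coeff_map, eq_intCast]
      _ = (expand 2 two_ne_zero (triangularSeries (ZMod 2))).coeff (2 * n) := by
          rw [map_mul, map_dissect, map_dissect, map_regularSeries,
            dissect_two_zero_mul_dissect_two_one_regularSeries]
      _ = (triangularSeries (ZMod 2)).coeff n := coeff_expand_mul 2 two_ne_zero _ n

theorem stmt_2 (n : ℕ) :
    ((∃ m : ℕ, 2 * n = m * (m + 1)) → coloredRegular 2 3 4 (4 * n + 1) ≡ 2 [MOD 4]) ∧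
    ((¬ ∃ m : ℕ, 2 * n = m * (m + 1)) → coloredRegular 2 3 4 (4 * n + 1) ≡ 0 [MOD 4]) := by
  obtain ⟨K, hK, hparity⟩ := exists_coloredRegular_four_mul_add_one_eq n
  rw [two_mul_eq_mul_succ_iff]
  refine ⟨fun hn => ?_, fun hn => ?_⟩
  · rw [coeff_triangularSeries_of_mem_range _ hn, ZMod.intCast_eq_one_iff_odd] at hparity
    obtain ⟨j, rfl⟩ := hparity
    unfold Nat.ModEq
    lia
  · rw [coeff_triangularSeries_of_notMem_range _ hn, ZMod.intCast_eq_zero_iff_even] at hparity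
    obtain ⟨j, rfl⟩ := hparity
    unfold Nat.ModEq
    lia
end
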